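/- arXiv:1108.1637 — 3 statements merged into one kernel-verified Lean document; each statement's English description precedes it below -/
import Mathlib

section
/- Let V = (v_1, …, v_n) be a vector configuration spanning ℝ^d and let τ₁, τ₂ ⊆ {1, …, n} be two simplices of V such that cone(τ₁) ∩ cone(τ₂) = cone(τ₁ ∩ τ₂). Then there exists a linear functional φ : ℝ^d → ℝ such that φ ≥ 0 on cone(τ₁), φ ≤ 0 on cone(τ₂), φ(v_j) > 0 for every j ∈ τ₁ \ τ₂, φ(v_j) < 0 for every j ∈ τ₂ \ τ₁, and φ vanishes identically on cone(τ₁ ∩ τ₂). -/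
/-!
Let `W` be the span of the common generators `(v_j)_{j ∈ τ₁ ∩ τ₂}`, and let `K` be the set of
convex combinations of the vectors `v_j` (`j ∈ τ₁ \ τ₂`) and `-v_j` (`j ∈ τ₂ \ τ₁`). `K` is compact
and convex, and `K ∩ W = ∅` (`combination_ne`): moving the negative terms of a relation
`∑ w_j (± v_j) ∈ W` to the other side gives a point of `cone(τ₁) ∩ cone(τ₂) = cone(τ₁ ∩ τ₂)`,
and uniqueness of coefficients in each simplex makes every `w_j` vanish. Hahn–Banach then strictly
separates `K` from `W`. A functional bounded on one side on the subspace `W` vanishes there, so the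
separating functional, signed so that `K` is its upper side, is positive on all the vectors `v_j`
and `-v_j` above.
-/

/-- The cone over a subset `τ` of the indices of a vector configuration `V`:
all nonnegative linear combinations of the vectors `(v_j)_{j ∈ τ}`.
(`coneOf V ∅ = {0}`.) -/
def coneOf {n d : ℕ} (V : Fin n → (Fin d → ℝ)) (τ : Finset (Fin n)) : Set (Fin d → ℝ) :=
  {x | ∃ t : Fin n → ℝ, (∀ j, 0 ≤ t j) ∧ x = ∑ j ∈ τ, t j • V j}

/-- Coefficients in a simplex are unique, so if a combination of `(v_j)_{j ∈ τ}` is also one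
of `(v_j)_{j ∈ σ}` with `σ ⊆ τ`, its coefficients on `τ \ σ` are zero. -/
lemma coeff_eq_zero {n d : ℕ} {V : Fin n → (Fin d → ℝ)} {τ σ : Finset (Fin n)}
    (h : LinearIndependent ℝ (fun j : τ => V j)) (hσ : σ ⊆ τ) {t s : Fin n → ℝ}
    (hts : ∑ j ∈ τ, t j • V j = ∑ j ∈ σ, s j • V j) {j : Fin n} (hj : j ∈ τ) (hjσ : j ∉ σ) :
    t j = 0 := by
  have h0 : ∑ i ∈ τ, (t i - if i ∈ σ then s i else 0) • V i = 0 := by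
    simp only [sub_smul, Finset.sum_sub_distrib, ite_smul, zero_smul]
    rw [hts, Finset.sum_ite_mem, Finset.inter_eq_right.mpr hσ, sub_self]
  have h' : LinearIndepOn ℝ V (τ : Set (Fin n)) := h
  have := linearIndepOn_finset_iff.mp h' _ h0 j hj
  simpa [hjσ] using this

/-- The generator `v_j` for `j ∈ τ₁`, and `-v_j` otherwise. -/
def signedGen {n d : ℕ} (V : Fin n → (Fin d → ℝ)) (τ₁ : Finset (Fin n)) (j : Fin n) :
    Fin d → ℝ :=
  if j ∈ τ₁ then V j else -V j

/-- No convex combination of the signed generators indexed by the symmetric difference of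
`τ₁` and `τ₂` lies in the span of the common generators. -/
lemma combination_ne {n d : ℕ} {V : Fin n → (Fin d → ℝ)} {τ₁ τ₂ : Finset (Fin n)}
    (h₁ : LinearIndependent ℝ (fun j : τ₁ => V j))
    (h₂ : LinearIndependent ℝ (fun j : τ₂ => V j))
    (hmeet : coneOf V τ₁ ∩ coneOf V τ₂ = coneOf V (τ₁ ∩ τ₂))
    {w c : Fin n → ℝ} (hw : w ∈ stdSimplex ℝ (Fin n)) (hw0 : ∀ j, (j ∈ τ₁ ↔ j ∈ τ₂) → w j = 0) :
    ∑ j, w j • signedGen V τ₁ j ≠ ∑ j ∈ τ₁ ∩ τ₂, c j • V j := by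
  intro hrel
  -- The positive and negative parts of `c` go to opposite sides, as `w` already does.
  let t₁ : Fin n → ℝ := fun j => if j ∈ τ₁ ∩ τ₂ then max (-c j) 0 else w j
  let t₂ : Fin n → ℝ := fun j => if j ∈ τ₁ ∩ τ₂ then max (c j) 0 else w j
  have ht₁ : ∀ j, 0 ≤ t₁ j := fun j => by
    dsimp only [t₁]; split_ifs; exacts [le_max_right _ _, hw.1 j]
  have ht₂ : ∀ j, 0 ≤ t₂ j := fun j => by
    dsimp only [t₂]; split_ifs; exacts [le_max_right _ _, hw.1 j]
  have heq : ∑ j ∈ τ₁, t₁ j • V j = ∑ j ∈ τ₂, t₂ j • V j := by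
    rw [← sub_eq_zero, ← sub_eq_zero.mpr hrel]
    have hsum : ∀ (τ : Finset (Fin n)) (g : Fin n → Fin d → ℝ),
        ∑ j ∈ τ, g j = ∑ j, if j ∈ τ then g j else 0 := by simp [Finset.sum_ite_mem]
    rw [hsum τ₁, hsum τ₂, hsum (τ₁ ∩ τ₂)]
    rw [← Finset.sum_sub_distrib, ← Finset.sum_sub_distrib]
    refine Finset.sum_congr rfl fun j _ => ?_
    by_cases a : j ∈ τ₁ <;> by_cases b : j ∈ τ₂
    · have := hw0 j (by simp [a, b])
      have hc := max_zero_sub_max_neg_zero_eq_self (c j)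
      simp only [t₁, t₂, Finset.mem_inter, a, b, and_self, if_true, this, zero_smul, zero_sub,
        ← sub_smul, ← neg_smul]
      congr 1
      linarith
    · simp [t₁, a, b, signedGen]
    · simp [t₂, a, b, signedGen]
    · simp [a, b, hw0 j (by simp [a, b])]
  have hx : ∑ j ∈ τ₁, t₁ j • V j ∈ coneOf V τ₁ ∩ coneOf V τ₂ := ⟨⟨t₁, ht₁, rfl⟩, ⟨t₂, ht₂, heq⟩⟩
  rw [hmeet] at hx
  obtain ⟨s, -, hs⟩ := hx
  have hzero : ∀ j, w j = 0 := by
    intro j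
    by_cases a : j ∈ τ₁ <;> by_cases b : j ∈ τ₂
    · exact hw0 j (by simp [a, b])
    · simpa [t₁, b] using coeff_eq_zero h₁ Finset.inter_subset_left hs a (by simp [b])
    · simpa [t₂, a] using coeff_eq_zero h₂ Finset.inter_subset_right (heq.symm.trans hs) b
        (by simp [a])
    · exact hw0 j (by simp [a, b])
  have := hw.2
  simp [hzero] at this

/-- If `τ₁`, `τ₂` are simplices of `V` with `cone(τ₁) ∩ cone(τ₂) = cone(τ₁ ∩ τ₂)`,
then there is a linear functional `φ` which is nonnegative on `cone(τ₁)`,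
nonpositive on `cone(τ₂)`, strictly positive on the generators in `τ₁ \ τ₂`,
strictly negative on the generators in `τ₂ \ τ₁`, and identically zero on
`cone(τ₁ ∩ τ₂)`. -/
theorem exists_separating_functional {n d : ℕ} (V : Fin n → (Fin d → ℝ))
    (hV : Submodule.span ℝ (Set.range V) = ⊤)
    (τ₁ τ₂ : Finset (Fin n))
    (h₁ : LinearIndependent ℝ (fun j : τ₁ => V j))
    (h₂ : LinearIndependent ℝ (fun j : τ₂ => V j))
    (hmeet : coneOf V τ₁ ∩ coneOf V τ₂ = coneOf V (τ₁ ∩ τ₂)) :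
    ∃ φ : (Fin d → ℝ) →ₗ[ℝ] ℝ,
      (∀ x ∈ coneOf V τ₁, 0 ≤ φ x) ∧
      (∀ x ∈ coneOf V τ₂, φ x ≤ 0) ∧
      (∀ j ∈ τ₁ \ τ₂, 0 < φ (V j)) ∧
      (∀ j ∈ τ₂ \ τ₁, φ (V j) < 0) ∧
      (∀ x ∈ coneOf V (τ₁ ∩ τ₂), φ x = 0) := by
  let K₀ : Set (Fin n → ℝ) :=
    stdSimplex ℝ (Fin n) ∩ {w | ∀ j, (j ∈ τ₁ ↔ j ∈ τ₂) → w j = 0}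
  let L : (Fin n → ℝ) →ₗ[ℝ] (Fin d → ℝ) := Fintype.linearCombination ℝ (signedGen V τ₁)
  let W : Submodule ℝ (Fin d → ℝ) := Submodule.span ℝ (V '' (τ₁ ∩ τ₂ : Finset (Fin n)))
  have hK₀c : IsCompact K₀ := by
    refine (isCompact_stdSimplex ℝ (Fin n)).inter_right ?_
    simp only [Set.ofPred_forall]
    exact isClosed_iInter fun j => isClosed_iInter fun _ =>
      isClosed_eq (continuous_apply j) continuous_const
  have hK₀v : Convex ℝ K₀ := by
    refine (convex_stdSimplex ℝ (Fin n)).inter ?_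
    intro x hx y hy a b _ _ _ j hj
    simp [hx j hj, hy j hj]
  have hdisj : Disjoint (W : Set (Fin d → ℝ)) (L '' K₀) := by
    rw [Set.disjoint_right]
    rintro _ ⟨w, hw, rfl⟩ hW
    obtain ⟨c, hc⟩ := Submodule.mem_span_image_finset_iff_exists_fun ℝ |>.mp hW
    let c' : Fin n → ℝ := fun j => if h : j ∈ τ₁ ∩ τ₂ then c ⟨j, h⟩ else 0
    have hc' : ∑ j ∈ τ₁ ∩ τ₂, c' j • V j = L w := by
      rw [← Finset.sum_coe_sort, ← hc]
      exact Finset.sum_congr rfl fun j _ => by simp only [c', dif_pos j.2]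
    exact combination_ne h₁ h₂ hmeet hw.1 hw.2 (c := c')
      (by rw [hc']; exact (Fintype.linearCombination_apply ℝ _ _).symm)
  obtain ⟨f, u, v, hfu, huv, hfv⟩ := geometric_hahn_banach_closed_compact
    W.convex W.closed_of_finiteDimensional (hK₀v.linear_image L)
    (hK₀c.image L.continuous_of_finiteDimensional) hdisj
  have hfW : ∀ x ∈ W, f x = 0 := by
    intro x hx
    by_contra hne
    -- the multiple of `x` on which `f` takes the value `u` violates the bound `f < u`
    have := hfu ((u / f x) • x) (W.smul_mem _ hx)
    rw [map_smul, smul_eq_mul, div_mul_cancel₀ _ hne] at this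
    exact lt_irrefl _ this
  have hv : 0 < v := lt_trans (by simpa using hfu 0 W.zero_mem) huv
  have hgen : ∀ j, ¬ (j ∈ τ₁ ↔ j ∈ τ₂) → 0 < f (signedGen V τ₁ j) := by
    intro j hj
    refine hv.trans (hfv _ ⟨Pi.single j 1, ⟨single_mem_stdSimplex ℝ j, fun i hi => ?_⟩, ?_⟩)
    · exact Pi.single_eq_of_ne (by rintro rfl; exact hj hi) 1
    · simp [L]
  have hpos : ∀ j ∈ τ₁ \ τ₂, 0 < f (V j) := by
    intro j hj
    rw [Finset.mem_sdiff] at hj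
    simpa [signedGen, hj.1] using hgen j (by simp [hj.1, hj.2])
  have hneg : ∀ j ∈ τ₂ \ τ₁, f (V j) < 0 := by
    intro j hj
    rw [Finset.mem_sdiff] at hj
    simpa [signedGen, hj.2] using hgen j (by simp [hj.1, hj.2])
  have hcom : ∀ j ∈ τ₁ ∩ τ₂, f (V j) = 0 := fun j hj =>
    hfW _ (Submodule.subset_span ⟨j, hj, rfl⟩)
  refine ⟨(f : (Fin d → ℝ) →ₗ[ℝ] ℝ), ?_, ?_, hpos, hneg, ?_⟩
  · rintro x ⟨t, ht, rfl⟩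
    simp only [ContinuousLinearMap.coe_coe, map_sum, map_smul, smul_eq_mul]
    refine Finset.sum_nonneg fun j hj => mul_nonneg (ht j) ?_
    by_cases b : j ∈ τ₂
    · exact (hcom j (by simp [hj, b])).ge
    · exact (hpos j (by simp [hj, b])).le
  · rintro x ⟨t, ht, rfl⟩
    simp only [ContinuousLinearMap.coe_coe, map_sum, map_smul, smul_eq_mul]
    refine Finset.sum_nonpos fun j hj => mul_nonpos_of_nonneg_of_nonpos (ht j) ?_
    by_cases a : j ∈ τ₁
    · exact (hcom j (by simp [hj, a])).le
    · exact (hneg j (by simp [hj, a])).le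
  · rintro x ⟨t, -, rfl⟩
    simp only [ContinuousLinearMap.coe_coe, map_sum, map_smul, smul_eq_mul]
    exact Finset.sum_eq_zero fun j hj => by rw [hcom j hj, mul_zero]
end

section
/- Let V = (v_1, …, v_n) be a vector configuration spanning ℝ^d and let 𝕋 be a complete triangulation of V. Then for every maximal simplex E ∈ 𝕋 and every i ∈ E, there exists k ∈ {1, …, n} with k ∉ E such that (E \ {i}) ∪ {k} is again a maximal simplex of 𝕋. -/
/-- A triangulation of a vector configuration `V`: a nonempty finite collection of
simplices (index sets of linearly independent subfamilies), closed under taking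
subsets, such that the cones over any two members intersect along the cone over
their intersection. -/
def IsTriangulation {n d : ℕ} (V : Fin n → (Fin d → ℝ)) (T : Finset (Finset (Fin n))) : Prop :=
  T.Nonempty ∧
  (∀ τ ∈ T, LinearIndependent ℝ (fun j : τ => V j)) ∧
  (∀ τ ∈ T, ∀ τ' ⊆ τ, τ' ∈ T) ∧
  (∀ τ ∈ T, ∀ τ' ∈ T, coneOf V τ ∩ coneOf V τ' = coneOf V (τ ∩ τ'))

/-- A triangulation is complete if every simplex is contained in a maximal one
(a simplex of cardinality `d`) and the union of all its cones is all of `ℝ^d`. -/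
def IsCompleteTriangulation {n d : ℕ} (V : Fin n → (Fin d → ℝ)) (T : Finset (Finset (Fin n))) : Prop :=
  (∀ τ ∈ T, ∃ E ∈ T, τ ⊆ E ∧ E.card = d) ∧
  (⋃ τ ∈ T, coneOf V τ) = Set.univ


/-- Enlarging the index set enlarges the cone: put zero coefficients on the new indices. -/
lemma coneOf_mono {n d : ℕ} (V : Fin n → (Fin d → ℝ)) {σ τ : Finset (Fin n)} (h : σ ⊆ τ) :
    coneOf V σ ⊆ coneOf V τ := by
  rintro x ⟨t, ht, rfl⟩
  refine ⟨fun j => if j ∈ σ then t j else 0, fun j => ?_, ?_⟩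
  · dsimp only
    split_ifs
    exacts [ht j, le_rfl]
  · rw [← Finset.sum_subset h]
    · exact Finset.sum_congr rfl fun j hj => by simp [hj]
    · intro j _ hj
      simp [hj]

/-- The vectors of a maximal simplex form a basis of `ℝ^d`. -/
lemma exists_basis {n d : ℕ} (V : Fin n → (Fin d → ℝ)) {τ : Finset (Fin n)}
    (h : LinearIndependent ℝ (fun j : τ => V j)) (hc : τ.card = d) :
    ∃ B : Module.Basis τ ℝ (Fin d → ℝ), ∀ j, B j = V j := by
  rcases τ.eq_empty_or_nonempty with rfl | hne
  · -- Here `d = 0`; the general constructor below needs a nonempty index type.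
    obtain rfl : d = 0 := by simpa using hc.symm
    exact ⟨Module.Basis.empty _, fun j => absurd j.2 (Finset.notMem_empty _)⟩
  · have : Nonempty τ := hne.to_subtype
    refine ⟨basisOfLinearIndependentOfCardEqFinrank h (by simp [hc]), fun j => by simp⟩

lemma repr_sum {n d : ℕ} (V : Fin n → (Fin d → ℝ)) {σ τ : Finset (Fin n)} (h : σ ⊆ τ)
    (B : Module.Basis τ ℝ (Fin d → ℝ)) (hB : ∀ j, B j = V j) (t : Fin n → ℝ) (j : τ) :
    B.repr (∑ k ∈ σ, t k • V k) j = if (j : Fin n) ∈ σ then t j else 0 := by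
  have key : ∀ k ∈ σ, B.repr (t k • V k) j = if k = j then t k else 0 := by
    intro k hk
    have : V k = B ⟨k, h hk⟩ := (hB ⟨k, h hk⟩).symm
    rw [this, map_smul, Module.Basis.repr_self]
    simp [Finsupp.single_apply, Subtype.ext_iff]
  rw [map_sum, Finsupp.finsetSum_apply, Finset.sum_congr rfl key, Finset.sum_ite_eq']

lemma mem_coneOf_iff {n d : ℕ} (V : Fin n → (Fin d → ℝ)) {τ : Finset (Fin n)}
    (B : Module.Basis τ ℝ (Fin d → ℝ)) (hB : ∀ j, B j = V j) (x : Fin d → ℝ) :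
    x ∈ coneOf V τ ↔ ∀ j, 0 ≤ B.repr x j := by
  constructor
  · rintro ⟨t, ht, rfl⟩ j
    rw [repr_sum V subset_rfl B hB]
    simpa using ht j
  · intro h
    refine ⟨fun j => if hj : j ∈ τ then B.repr x ⟨j, hj⟩ else 0, fun j => ?_, ?_⟩
    · dsimp only
      split_ifs
      exacts [h _, le_rfl]
    · rw [← Finset.sum_coe_sort]
      conv_lhs => rw [← B.sum_repr x]
      exact Finset.sum_congr rfl fun j _ => by simp [hB]

/-- The passage to the limit `ε → 0` along `ε = 1 / (m + 1)`, `m ∈ S`, in an affine function of `ε`. -/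
lemma nonneg_of_infinite {a b : ℝ} {S : Set ℕ} (hS : S.Infinite)
    (h : ∀ m ∈ S, 0 ≤ a - 1 / ((m : ℝ) + 1) * b) : 0 ≤ a := by
  by_contra! ha
  obtain ⟨N, hN⟩ := exists_nat_gt (b / a)
  obtain ⟨m, hm, hNm⟩ := hS.exists_gt N
  have h1 := h m hm
  have h2 : (N : ℝ) < m := by exact_mod_cast hNm
  have h3 : (0 : ℝ) < m + 1 := by positivity
  have h4 : b / a < m + 1 := by linarith
  rw [div_lt_iff_of_neg ha] at h4
  have h5 : 0 ≤ (a - 1 / ((m : ℝ) + 1) * b) * (m + 1) := mul_nonneg h1 h3.le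
  have h6 : (a - 1 / ((m : ℝ) + 1) * b) * (m + 1) = (m + 1) * a - b := by
    field_simp
  linarith

/-- For every maximal simplex `E` of a complete triangulation and every `i ∈ E`,
there is `k ∉ E` such that `(E \ {i}) ∪ {k}` is again a maximal simplex. -/
theorem exists_flip {n d : ℕ} (V : Fin n → (Fin d → ℝ))
    (hV : Submodule.span ℝ (Set.range V) = ⊤)
    (T : Finset (Finset (Fin n))) (hT : IsTriangulation V T) (hTc : IsCompleteTriangulation V T)
    (E : Finset (Fin n)) (hE : E ∈ T) (hEcard : E.card = d)
    (i : Fin n) (hi : i ∈ E) :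
    ∃ k : Fin n, k ∉ E ∧ insert k (E.erase i) ∈ T ∧ (insert k (E.erase i)).card = d := by
  classical
  obtain ⟨-, hind, hsub, hint⟩ := hT
  obtain ⟨hmax, hcov⟩ := hTc
  have hFE : E.erase i ⊆ E := Finset.erase_subset _ _
  have hFT : E.erase i ∈ T := hsub E hE _ hFE
  obtain ⟨B, hB⟩ := exists_basis V (hind E hE) hEcard
  set p : Fin d → ℝ := ∑ j ∈ E.erase i, (1 : ℝ) • V j with hp
  have hcover : ∀ m : ℕ, ∃ τ : Finset (Fin n), (τ ∈ T ∧ τ.card = d) ∧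
      p - (1 / ((m : ℝ) + 1)) • V i ∈ coneOf V τ := by
    intro m
    have hx : p - (1 / ((m : ℝ) + 1)) • V i ∈ ⋃ τ ∈ T, coneOf V τ := hcov ▸ Set.mem_univ _
    simp only [Set.mem_iUnion, exists_prop] at hx
    obtain ⟨σ, hσ, hxσ⟩ := hx
    obtain ⟨τ, hτ, hστ, hc⟩ := hmax σ hσ
    exact ⟨τ, ⟨hτ, hc⟩, coneOf_mono V hστ hxσ⟩
  choose f hf hfcone using hcover
  obtain ⟨E', hinf⟩ := Finite.exists_infinite_fiber f
  have hS : (f ⁻¹' {E'}).Infinite := Set.infinite_coe_iff.mp hinf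
  obtain ⟨m, hm⟩ := hS.nonempty
  have hE'T : E' ∈ T := by rw [← show f m = E' from hm]; exact (hf m).1
  have hE'card : E'.card = d := by rw [← show f m = E' from hm]; exact (hf m).2
  have hmcone : p - (1 / ((m : ℝ) + 1)) • V i ∈ coneOf V E' := by
    rw [← show f m = E' from hm]; exact hfcone m
  have hpE' : p ∈ coneOf V E' := by
    -- The coordinates of `p - ε • v_i` in the basis `E'` are affine in `ε`.
    obtain ⟨B', hB'⟩ := exists_basis V (hind E' hE'T) hE'card
    rw [mem_coneOf_iff V B' hB']
    intro j
    refine nonneg_of_infinite (b := B'.repr (V i) j) hS fun l hl => ?_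
    have h := hfcone l
    rw [show f l = E' from hl, mem_coneOf_iff V B' hB'] at h
    simpa using h j
  have hFE' : E.erase i ⊆ E' := by
    have hpF : p ∈ coneOf V (E.erase i) := ⟨fun _ => 1, fun _ => zero_le_one, rfl⟩
    have hmem : p ∈ coneOf V (E' ∩ E.erase i) := by
      rw [← hint E' hE'T _ hFT]
      exact ⟨hpE', hpF⟩
    obtain ⟨t, -, ht⟩ := hmem
    intro j hj
    by_contra hj'
    -- The coordinate of `p` along `v_j` is both `1` and `0`.
    have h1 := repr_sum V hFE B hB (fun _ => 1) ⟨j, hFE hj⟩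
    have h2 := repr_sum V ((Finset.inter_subset_right (s₁ := E')).trans hFE) B hB t ⟨j, hFE hj⟩
    rw [← ht] at h2
    rw [← hp, h2] at h1
    simp [hj'] at h1
    exact h1 (Finset.ne_of_mem_erase hj) (hFE hj)
  have hiE' : i ∉ E' := by
    intro hi'
    have hEE' : E = E' := by
      refine Finset.eq_of_subset_of_card_le (fun j hj => ?_) (by rw [hE'card, hEcard])
      by_cases hji : j = i
      · exact hji ▸ hi'
      · exact hFE' (Finset.mem_erase.mpr ⟨hji, hj⟩)
    rw [← hEE', mem_coneOf_iff V B hB] at hmcone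
    have h1 := hmcone ⟨i, hi⟩
    have h2 := repr_sum V hFE B hB (fun _ => 1) ⟨i, hi⟩
    have h3 : V i = B ⟨i, hi⟩ := (hB ⟨i, hi⟩).symm
    rw [← hp] at h2
    rw [map_sub, map_smul, Finsupp.sub_apply, h2, h3, Module.Basis.repr_self] at h1
    simp at h1
    have h4 : (0 : ℝ) < m + 1 := by positivity
    linarith
  have hcardF : (E.erase i).card + 1 = E'.card := by
    rw [Finset.card_erase_add_one hi, hEcard, hE'card]
  obtain ⟨k, hk, hkE'⟩ := Finset.exists_eq_insert_iff.mpr ⟨hFE', hcardF⟩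
  refine ⟨k, fun hkE => ?_, hkE' ▸ hE'T, hkE' ▸ hE'card⟩
  have hki : k ≠ i := by
    rintro rfl
    exact hiE' (hkE' ▸ Finset.mem_insert_self _ _)
  exact hk (Finset.mem_erase.mpr ⟨hki, hkE⟩)
end

section
/- (Dehn–Sommerville equations) Let V = (v_1, …, v_n) be a vector configuration spanning ℝ^d and let 𝕋 be a complete polytopal triangulation of V. Then the h-vector of 𝕋 satisfies h_{d−k} = h_k for every k with 0 ≤ k ≤ d. -/
/-- `f_j`: the number of simplices of `T` of cardinality `j`
(so `f_0 = 1`, counting the empty simplex). -/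
def fNum {n : ℕ} (T : Finset (Finset (Fin n))) (j : ℕ) : ℕ :=
  (T.filter fun τ => τ.card = j).card

/-- The `h`-vector of a triangulation:
`h_k = ∑_{j=0}^{k} (−1)^{k−j} * binom(d−j, k−j) * f_j`. -/
def hNum {n : ℕ} (d : ℕ) (T : Finset (Finset (Fin n))) (k : ℕ) : ℤ :=
  ∑ j ∈ Finset.range (k + 1),
    (-1 : ℤ) ^ (k - j) * (Nat.choose (d - j) (k - j) : ℤ) * (fNum T j : ℤ)

/-- A complete triangulation is polytopal (its fan is the normal fan of a simple
polytope) if there is a convex function `ψ : ℝ^d → ℝ` restricting, on the cone of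
each maximal simplex, to a linear functional, these functionals being pairwise
distinct for distinct maximal simplices. -/
def IsPolytopal {n d : ℕ} (V : Fin n → (Fin d → ℝ)) (T : Finset (Finset (Fin n))) : Prop :=
  ∃ (ψ : (Fin d → ℝ) → ℝ) (ℓ : Finset (Fin n) → ((Fin d → ℝ) →ₗ[ℝ] ℝ)),
    ConvexOn ℝ Set.univ ψ ∧
    (∀ E ∈ T, E.card = d → ∀ x ∈ coneOf V E, ψ x = ℓ E x) ∧
    (∀ E ∈ T, ∀ E' ∈ T, E.card = d → E'.card = d → E ≠ E' → ℓ E ≠ ℓ E')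

/-! ### Combinatorics of a partition into intervals -/

/-- The contribution of an interval `[N, E]` with `#N = r`, `#E = d` to `h_k`, after setting
`D = d - r` and `K = k - r`: it is `1` if `K = 0` and vanishes otherwise. -/
lemma alternating_choose_sum (D K : ℕ) (hK : K ≤ D) :
    ∑ m ∈ Finset.range (K + 1),
      (D.choose m : ℤ) * ((-1) ^ (K - m) * ((D - m).choose (K - m) : ℤ)) =
      if K = 0 then 1 else 0 := by
  have h1 : ∀ m ∈ Finset.range (K + 1),
      (D.choose m : ℤ) * ((-1) ^ (K - m) * ((D - m).choose (K - m) : ℤ)) =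
      (D.choose K : ℤ) * (-1) ^ K * ((-1) ^ m * (K.choose m : ℤ)) := by
    intro m hm
    have hm' : m ≤ K := Nat.lt_succ_iff.mp (Finset.mem_range.mp hm)
    have h2 : (D.choose K : ℤ) * K.choose m = D.choose m * (D - m).choose (K - m) := by
      exact_mod_cast Nat.choose_mul hm'
    have h3 : (-1 : ℤ) ^ (K - m) = (-1) ^ K * (-1) ^ m := by
      obtain ⟨e, rfl⟩ := Nat.exists_eq_add_of_le hm'
      rw [Nat.add_sub_cancel_left, pow_add, mul_right_comm, ← mul_pow]
      norm_num
    rw [h3]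
    linear_combination (-(-1) ^ K * (-1) ^ m : ℤ) * h2
  rw [Finset.sum_congr rfl h1, ← Finset.mul_sum, Int.alternating_sum_range_choose]
  split_ifs with h
  · subst h; simp
  · simp

lemma sum_interval {n : ℕ} (d k : ℕ) (hk : k ≤ d) (N E : Finset (Fin n)) (hNE : N ⊆ E)
    (hE : E.card = d) :
    ∑ τ ∈ Finset.Icc N E, (if τ.card ≤ k then
      (-1 : ℤ) ^ (k - τ.card) * ((d - τ.card).choose (k - τ.card) : ℤ) else 0) =
      if N.card = k then 1 else 0 := by
  have hr : N.card ≤ d := hE ▸ Finset.card_le_card hNE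
  -- `ρ ↦ N ∪ ρ` identifies the subsets of `E \ N` with the interval `[N, E]`.
  rw [Finset.Icc_eq_image_powerset hNE, Finset.sum_image]
  · have h1 : ∀ ρ ∈ (E \ N).powerset, (N ∪ ρ).card = N.card + ρ.card := by
      intro ρ hρ
      apply Finset.card_union_of_disjoint
      exact Finset.disjoint_of_subset_right (Finset.mem_powerset.mp hρ) Finset.disjoint_sdiff
    rw [Finset.sum_congr rfl (g := fun ρ => (fun m : ℕ => if N.card + m ≤ k then
      (-1 : ℤ) ^ (k - (N.card + m)) * ((d - (N.card + m)).choose (k - (N.card + m)) : ℤ) else 0)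
      ρ.card) (fun ρ hρ => by simp only [h1 ρ hρ]), Finset.sum_powerset_apply_card (fun m : ℕ => if N.card + m ≤ k then
      (-1 : ℤ) ^ (k - (N.card + m)) * ((d - (N.card + m)).choose (k - (N.card + m)) : ℤ) else 0),
      Finset.card_sdiff_of_subset hNE, hE]
    by_cases hrk : N.card ≤ k
    · have h2 := alternating_choose_sum (d - N.card) (k - N.card) (by omega)
      have h3 : (k - N.card = 0) ↔ (N.card = k) := by omega
      simp only [h3] at h2
      rw [← h2]
      symm
      refine Finset.sum_subset_zero_on_sdiff
        (Finset.range_subset_range.mpr (by omega)) ?_ ?_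
      · intro m hm
        simp only [Finset.mem_sdiff, Finset.mem_range] at hm
        rw [if_neg (by omega), smul_zero]
      · intro m hm
        rw [Finset.mem_range] at hm
        rw [if_pos (by omega), Nat.sub_sub, Nat.sub_sub, nsmul_eq_mul]
    · rw [if_neg (by omega)]
      apply Finset.sum_eq_zero
      intro m _
      rw [if_neg (by omega), smul_zero]
  · intro ρ hρ ρ' hρ' h
    simp only [Finset.coe_powerset, Set.mem_preimage, Set.mem_powerset_iff,
      Finset.coe_subset] at hρ hρ'
    have e : ∀ σ : Finset (Fin n), σ ⊆ E \ N → (N ∪ σ) \ N = σ := fun σ hσ =>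
      Finset.union_sdiff_cancel_left
        (Finset.disjoint_of_subset_right hσ Finset.disjoint_sdiff)
    rw [← e ρ hρ, ← e ρ' hρ']
    exact congrArg (· \ N) h

lemma hNum_eq_sum {n : ℕ} (d : ℕ) (T : Finset (Finset (Fin n))) (k : ℕ) :
    hNum d T k = ∑ τ ∈ T, (if τ.card ≤ k then
      (-1 : ℤ) ^ (k - τ.card) * ((d - τ.card).choose (k - τ.card) : ℤ) else 0) := by
  unfold hNum fNum
  simp_rw [Finset.card_filter, Nat.cast_sum, Finset.mul_sum]
  rw [Finset.sum_comm]
  refine Finset.sum_congr rfl fun τ _ => ?_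
  simp

/-- If the intervals `[N E, E]`, for `E` maximal, partition `T`, then `h_k` counts the maximal
simplices with `#(N E) = k`. -/
lemma hNum_eq_card {n d : ℕ} (T : Finset (Finset (Fin n))) (N : Finset (Fin n) → Finset (Fin n))
    (hdown : ∀ τ ∈ T, ∀ τ' ⊆ τ, τ' ∈ T) (hN : ∀ E, N E ⊆ E)
    (hpart : ∀ τ ∈ T, ∃! E, E ∈ T ∧ E.card = d ∧ N E ⊆ τ ∧ τ ⊆ E) (k : ℕ) (hk : k ≤ d) :
    hNum d T k = (T.filter fun E => E.card = d ∧ (N E).card = k).card := by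
  rw [hNum_eq_sum]
  set g : Finset (Fin n) → ℤ := fun τ => if τ.card ≤ k then
      (-1 : ℤ) ^ (k - τ.card) * ((d - τ.card).choose (k - τ.card) : ℤ) else 0 with hg
  have h1 : ∀ τ ∈ T, g τ = ∑ E ∈ T, if E.card = d ∧ N E ⊆ τ ∧ τ ⊆ E then g τ else 0 := by
    intro τ hτ
    obtain ⟨E, ⟨hE, hE'⟩, hu⟩ := hpart τ hτ
    rw [Finset.sum_eq_single_of_mem E hE, if_pos hE']
    intro E' hE'T hne
    exact if_neg fun h => hne (hu E' ⟨hE'T, h⟩)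
  rw [Finset.sum_congr rfl h1, Finset.sum_comm, Finset.card_filter, Nat.cast_sum]
  refine Finset.sum_congr rfl fun E hE => ?_
  by_cases hd : E.card = d
  · simp only [hd, true_and]
    rw [← Finset.sum_filter]
    have : T.filter (fun τ => N E ⊆ τ ∧ τ ⊆ E) = Finset.Icc (N E) E := by
      ext τ
      simp only [Finset.mem_filter, Finset.mem_Icc]
      exact ⟨fun h => h.2, fun h => ⟨hdown E hE τ h.2, h⟩⟩
    rw [this, sum_interval d k hk (N E) E (hN E) hd]
    simp
  · simp [hd]

/-! ### Geometry of a generic direction -/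

lemma coeff_unique {n d : ℕ} {V : Fin n → (Fin d → ℝ)} {E : Finset (Fin n)}
    (hE : LinearIndependent ℝ (fun j : E => V j)) {a b : Fin n → ℝ}
    (h : ∑ j ∈ E, a j • V j = ∑ j ∈ E, b j • V j) : ∀ j ∈ E, a j = b j := by
  intro j hj
  have h0 : ∑ i : E, (a i - b i) • V i = 0 := by
    rw [Finset.sum_coe_sort E (fun i => (a i - b i) • V i)]
    simp [sub_smul, Finset.sum_sub_distrib, h]
  exact sub_eq_zero.mp (Fintype.linearIndependent_iff.mp hE (fun i => a i - b i) h0 ⟨j, hj⟩)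

lemma exists_coeff {n d : ℕ} {V : Fin n → (Fin d → ℝ)} {E : Finset (Fin n)}
    (hE : LinearIndependent ℝ (fun j : E => V j)) (hd : E.card = d) (x : Fin d → ℝ) :
    ∃ a : Fin n → ℝ, x = ∑ j ∈ E, a j • V j := by
  have h1 : x ∈ Submodule.span ℝ (Set.range fun j : E => V j) := by
    rw [hE.span_eq_top_of_card_eq_finrank' (by simp [hd])]
    trivial
  obtain ⟨c, hc⟩ := (Submodule.mem_span_range_iff_exists_fun ℝ).mp h1
  refine ⟨fun j => if h : j ∈ E then c ⟨j, h⟩ else 0, ?_⟩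
  rw [← hc, ← Finset.sum_coe_sort E]
  exact Finset.sum_congr rfl fun i _ => by simp

/-- A point with positive coordinates on `τ` which lies in `cone(τ ∩ σ)` forces `τ ⊆ σ`. -/
lemma subset_of_mem_coneOf_inter {n d : ℕ} {V : Fin n → (Fin d → ℝ)} {τ σ : Finset (Fin n)}
    (hτ : LinearIndependent ℝ (fun j : τ => V j)) {a : Fin n → ℝ} (ha : ∀ j ∈ τ, 0 < a j)
    (h : ∑ j ∈ τ, a j • V j ∈ coneOf V (τ ∩ σ)) : τ ⊆ σ := by
  obtain ⟨t, -, ht⟩ := h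
  have h2 : ∑ j ∈ τ, a j • V j = ∑ j ∈ τ, (if j ∈ σ then t j else 0) • V j := by
    rw [ht, ← Finset.filter_mem_eq_inter, Finset.sum_filter]
    exact Finset.sum_congr rfl fun j _ => by split_ifs <;> simp
  intro j hj
  by_contra hjσ
  have := coeff_unique hτ h2 j hj
  rw [if_neg hjσ] at this
  exact (ha j hj).ne' this

lemma mem_coneOf {n d : ℕ} {V : Fin n → (Fin d → ℝ)} {τ : Finset (Fin n)}
    {a : Fin n → ℝ} (ha : ∀ j ∈ τ, 0 ≤ a j) : ∑ j ∈ τ, a j • V j ∈ coneOf V τ :=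
  ⟨fun j => |a j|, fun _ => abs_nonneg _,
    Finset.sum_congr rfl fun j hj => by simp only [abs_of_nonneg (ha j hj)]⟩

/-- There is a direction all of whose coordinates with respect to all maximal simplices are
nonzero. -/
lemma exists_generic {n d : ℕ} (V : Fin n → (Fin d → ℝ)) (T : Finset (Finset (Fin n))) :
    ∃ w : Fin d → ℝ, ∀ E ∈ T, E.card = d → ∀ a : Fin n → ℝ, w = ∑ j ∈ E, a j • V j →
      ∀ j ∈ E, a j ≠ 0 := by
  -- A coordinate vanishes only if `w` lies in the span of fewer than `d` of the vectors.
  let S : Finset (Finset (Fin n)) := Finset.univ.filter fun σ => σ.card < d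
  have hS : ∀ σ ∈ S, Submodule.span ℝ (V '' (σ : Set (Fin n))) ≠ ⊤ := by
    intro σ hσ htop
    have h1 : σ.card < d := by simpa [S] using hσ
    have h2 : Module.finrank ℝ (Submodule.span ℝ (V '' (σ : Set (Fin n)))) ≤ σ.card := by
      have h3 := finrank_span_finset_le_card (R := ℝ) (σ.image V)
      rw [Set.finrank, Finset.coe_image] at h3
      exact h3.trans Finset.card_image_le
    rw [htop, finrank_top, Module.finrank_fin_fun] at h2
    omega
  have hne := Subspace.biUnion_ne_univ_of_top_notMem (k := ℝ) (E := Fin d → ℝ)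
    (s := S.image fun σ : Finset (Fin n) => Submodule.span ℝ (V '' (σ : Set (Fin n)))) (by
      intro h
      obtain ⟨σ, hσ, h⟩ := Finset.mem_image.mp h
      exact hS σ hσ h)
  obtain ⟨w, hw⟩ := (Set.ne_univ_iff_exists_notMem _).mp hne
  refine ⟨w, fun E _ hd a ha j hj h0 => hw ?_⟩
  simp only [Set.mem_iUnion]
  refine ⟨_, Finset.mem_image_of_mem _ (a := E.erase j) ?_, ?_⟩
  · simp only [S, Finset.mem_filter, Finset.mem_univ, true_and]
    rw [← hd]
    exact Finset.card_erase_lt_of_mem hj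
  · rw [ha, ← Finset.add_sum_erase E _ hj, h0, zero_smul, zero_add]
    exact Submodule.sum_mem _ fun i hi => Submodule.smul_mem _ _
      (Submodule.subset_span ⟨i, hi, rfl⟩)

/-- For a generic direction `w` with coordinates `c E`, the intervals `[{j ∈ E | c E j < 0}, E]`
partition the triangulation: `E` is the maximal cone entered when leaving an interior point of
`cone(τ)` in direction `w`. -/
lemma existsUnique_maximal {n d : ℕ} {V : Fin n → (Fin d → ℝ)} {T : Finset (Finset (Fin n))}
    (hT : IsTriangulation V T) (hTc : IsCompleteTriangulation V T) (w : Fin d → ℝ)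
    (c : Finset (Fin n) → Fin n → ℝ)
    (hc : ∀ E ∈ T, E.card = d → w = ∑ j ∈ E, c E j • V j)
    (hc0 : ∀ E ∈ T, E.card = d → ∀ j ∈ E, c E j ≠ 0) (τ : Finset (Fin n)) (hτ : τ ∈ T) :
    ∃! E, E ∈ T ∧ E.card = d ∧ E.filter (fun j => c E j < 0) ⊆ τ ∧ τ ⊆ E := by
  obtain ⟨-, hli, -, hint⟩ := hT
  obtain ⟨hmax, hcov⟩ := hTc
  set p : Fin d → ℝ := ∑ j ∈ τ, (1 : ℝ) • V j with hp
  have hpE : ∀ E, τ ⊆ E → p = ∑ j ∈ E, (if j ∈ τ then (1 : ℝ) else 0) • V j := by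
    intro E hE
    simp_rw [ite_smul, zero_smul]
    rw [← Finset.sum_filter, Finset.filter_mem_eq_inter, Finset.inter_eq_right.mpr hE]
  apply existsUnique_of_exists_of_unique
  · -- By pigeonhole, one maximal cone contains `p + w / (m + 1)` for infinitely many `m`.
    have h1 : ∀ m : ℕ, ∃ E : {E // E ∈ T ∧ E.card = d},
        p + (1 / ((m : ℝ) + 1)) • w ∈ coneOf V E.1 := by
      intro m
      have : p + (1 / ((m : ℝ) + 1)) • w ∈ ⋃ σ ∈ T, coneOf V σ := by rw [hcov]; trivial
      simp only [Set.mem_iUnion] at this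
      obtain ⟨σ, hσ, hx⟩ := this
      obtain ⟨E, hE, hσE, hd⟩ := hmax σ hσ
      have h2 := hint σ hσ E hE
      rw [Finset.inter_eq_left.mpr hσE] at h2
      rw [← h2] at hx
      exact ⟨⟨E, hE, hd⟩, hx.2⟩
    choose F hF using h1
    obtain ⟨⟨E, hE, hd⟩, hinf⟩ := Finite.exists_infinite_fiber F
    have hinf' := Set.infinite_coe_iff.mp hinf
    obtain ⟨a, ha⟩ := exists_coeff (hli E hE) hd p
    have key : ∀ m ∈ F ⁻¹' {⟨E, hE, hd⟩}, ∀ j ∈ E, 0 ≤ a j + 1 / ((m : ℝ) + 1) * c E j := by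
      intro m hm j hj
      have h2 := hF m
      rw [show F m = ⟨E, hE, hd⟩ from hm] at h2
      obtain ⟨t, ht, hx⟩ := h2
      rw [ha] at hx
      nth_rewrite 1 [hc E hE hd] at hx
      rw [Finset.smul_sum, ← Finset.sum_add_distrib] at hx
      simp_rw [smul_smul, ← add_smul] at hx
      rw [coeff_unique (hli E hE) hx j hj]
      exact ht j
    have ha0 : ∀ j ∈ E, 0 ≤ a j := by
      intro j hj
      by_contra hneg
      push Not at hneg
      obtain ⟨M, hM⟩ := exists_nat_gt (|c E j| / (-a j))
      obtain ⟨m, hm, hMm⟩ := hinf'.exists_gt M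
      have h2 := key m hm j hj
      have hm0 : (0 : ℝ) < (m : ℝ) + 1 := by positivity
      have h3 : 0 ≤ a j * (m + 1) + c E j := by
        have := mul_nonneg h2 hm0.le
        field_simp at this
        linarith
      rw [div_lt_iff₀ (by linarith)] at hM
      have h4 : (M : ℝ) < m := by exact_mod_cast hMm
      nlinarith [le_abs_self (c E j)]
    have hτE : τ ⊆ E := by
      apply subset_of_mem_coneOf_inter (hli τ hτ) (a := fun _ => 1) (fun _ _ => one_pos)
      rw [← hint τ hτ E hE]
      refine ⟨mem_coneOf fun _ _ => zero_le_one, ?_⟩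
      rw [← hp, ha]
      exact mem_coneOf ha0
    refine ⟨E, hE, hd, fun j hj => ?_, hτE⟩
    obtain ⟨hjE, hneg⟩ := Finset.mem_filter.mp hj
    by_contra hjτ
    have haj := coeff_unique (hli E hE) (ha.symm.trans (hpE E hτE)) j hjE
    rw [if_neg hjτ] at haj
    obtain ⟨m, hm⟩ := hinf'.nonempty
    have h2 := key m hm j hjE
    rw [haj, zero_add] at h2
    have hm0 : (0 : ℝ) < 1 / ((m : ℝ) + 1) := by positivity
    nlinarith
  · -- For small `ε` the point `p + ε w` is interior to every cone of this kind.
    have h1 : ∀ E, E ∈ T ∧ E.card = d ∧ E.filter (fun j => c E j < 0) ⊆ τ ∧ τ ⊆ E →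
        ∀ᶠ ε : ℝ in nhdsWithin 0 (Set.Ioi 0),
          ∀ j ∈ E, 0 < (if j ∈ τ then (1 : ℝ) else 0) + ε * c E j := by
      rintro E ⟨hE, hd, hN, hτE⟩
      rw [Filter.eventually_all_finset]
      intro j hj
      by_cases hjτ : j ∈ τ
      · simp only [hjτ, if_true]
        have : Filter.Tendsto (fun ε : ℝ => 1 + ε * c E j) (nhdsWithin 0 (Set.Ioi 0))
            (nhds (1 + 0 * c E j)) :=
          (Continuous.tendsto (by fun_prop) 0).mono_left nhdsWithin_le_nhds
        exact this.eventually (lt_mem_nhds (by norm_num))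
      · simp only [hjτ, if_false, zero_add]
        have hpos : 0 < c E j := lt_of_le_of_ne
          (not_lt.mp fun h => hjτ (hN (Finset.mem_filter.mpr ⟨hj, h⟩))) (hc0 E hE hd j hj).symm
        filter_upwards [self_mem_nhdsWithin] with ε hε
        exact mul_pos hε hpos
    have h2 : ∀ E, E ∈ T ∧ E.card = d ∧ E.filter (fun j => c E j < 0) ⊆ τ ∧ τ ⊆ E → ∀ ε : ℝ,
        p + ε • w = ∑ j ∈ E, ((if j ∈ τ then (1 : ℝ) else 0) + ε * c E j) • V j := by
      rintro E ⟨hE, hd, hN, hτE⟩ ε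
      rw [hpE E hτE]
      nth_rewrite 1 [hc E hE hd]
      rw [Finset.smul_sum, ← Finset.sum_add_distrib]
      simp_rw [smul_smul, ← add_smul]
    intro E E' hE hE'
    obtain ⟨ε, hε, hε'⟩ := ((h1 E hE).and (h1 E' hE')).exists
    apply Finset.eq_of_subset_of_card_le
    · apply subset_of_mem_coneOf_inter (hli E hE.1) hε
      rw [← hint E hE.1 E' hE'.1]
      refine ⟨mem_coneOf fun j hj => (hε j hj).le, ?_⟩
      rw [← h2 E hE, h2 E' hE']
      exact mem_coneOf fun j hj => (hε' j hj).le
    · rw [hE.2.1, hE'.2.1]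

/-- Dehn–Sommerville equations: the `h`-vector of a complete polytopal triangulation
satisfies `h_{d−k} = h_k` for `0 ≤ k ≤ d`. -/
theorem dehn_sommerville {n d : ℕ} (V : Fin n → (Fin d → ℝ))
    (hV : Submodule.span ℝ (Set.range V) = ⊤)
    (T : Finset (Finset (Fin n)))
    (hT : IsTriangulation V T) (hTc : IsCompleteTriangulation V T)
    (hpoly : IsPolytopal V T)
    (k : ℕ) (hk : k ≤ d) :
    hNum d T (d - k) = hNum d T k := by
  obtain ⟨w, hw⟩ := exists_generic V T
  have hex : ∀ E : Finset (Fin n), ∃ a : Fin n → ℝ,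
      E ∈ T → E.card = d → w = ∑ j ∈ E, a j • V j := by
    intro E
    by_cases h : E ∈ T ∧ E.card = d
    · obtain ⟨a, ha⟩ := exists_coeff (hT.2.1 E h.1) h.2 w
      exact ⟨a, fun _ _ => ha⟩
    · exact ⟨0, fun h1 h2 => absurd ⟨h1, h2⟩ h⟩
  choose c hc using hex
  have hc0 : ∀ E ∈ T, E.card = d → ∀ j ∈ E, c E j ≠ 0 := fun E hE hd =>
    hw E hE hd (c E) (hc E hE hd)
  rw [hNum_eq_card T (fun E => E.filter fun j => c E j < 0) hT.2.2.1
      (fun E => Finset.filter_subset _ _) (existsUnique_maximal hT hTc w c hc hc0) k hk,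
    hNum_eq_card T (fun E => E.filter fun j => (-c) E j < 0) hT.2.2.1
      (fun E => Finset.filter_subset _ _)
      (existsUnique_maximal hT hTc (-w) (-c)
        (fun E hE hd => by
          nth_rewrite 1 [hc E hE hd]
          simp [Finset.sum_neg_distrib])
        (fun E hE hd j hj => neg_ne_zero.mpr (hc0 E hE hd j hj))) (d - k) (Nat.sub_le d k)]
  congr 2
  refine Finset.filter_congr fun E hE => and_congr_right fun hd => ?_
  -- Genericity makes the negative indices of `-w` the complement in `E` of those of `w`.
  have h1 := Finset.card_filter_add_card_filter_not (s := E) (fun j => c E j < 0)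
  have h2 : E.filter (fun j => ¬ c E j < 0) = E.filter (fun j => (-c) E j < 0) := by
    refine Finset.filter_congr fun j hj => ?_
    have := hc0 E hE hd j hj
    simp only [Pi.neg_apply, not_lt, neg_lt_zero]
    exact ⟨fun h => lt_of_le_of_ne h this.symm, le_of_lt⟩
  rw [h2, hd] at h1
  omega
end
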